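/- On five qubits, the least k such that some list of k CNOT gates has composition equal to the cyclic-shift permutation gate x ↦ x ∘ c, where c : Fin 5 → Fin 5 is the 5-cycle sending j to j+1 (mod 5), equals 12; i.e. C(5) = 12. -/

import Mathlib

/-- The CNOT gate with control `a` and target `b` acting on computational
basis states of an `n`-qubit system. -/
def CNOT {n : ℕ} (a b : Fin n) (x : Fin n → Bool) : Fin n → Bool :=
  fun j => if j = b then xor (x a) (x b) else x j

/-- The composition of a list of CNOT gates, applied in order. -/
def circuit {n : ℕ} (L : List (Fin n × Fin n)) (x : Fin n → Bool) : Fin n → Bool :=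
  L.foldl (fun y g => CNOT g.1 g.2 y) x

/-!
The shift is a product of four adjacent transpositions, each of which costs three gates. For the
lower bound consider a circuit of at most eleven gates for the shift `c`.

* Every qubit is targeted at least twice. By symmetry take qubit `0`; if only one gate targets it,
  that gate has to turn its content from `x 0` into `x 1`, so its control carries `x 0 + x 1` at
  that moment. As qubit `0` carries `x 0` before and `x 1` after it, only the parities carried by
  the other four qubits have to be tracked. They form a `4 × 5` matrix over the field with two
  elements, and the reachable matrices can be enumerated: a set of them is a number of `2 ^ 20`
  bits, on which a gate acts by masks and shifts.
* The first gate can be moved past the shift to the end of the circuit, where it targets another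
  qubit, so its target is targeted at least three times. Eleven gates leave room for a single such
  qubit, and rotating the circuit shows that each target is `c⁻¹` of the previous one.
* Transposing the circuit exchanges controls and targets, so the controls obey the same rule. The
  circuit is therefore determined by its length and its first gate, and no candidate works.
-/

section Circuits

variable {n : ℕ} {σ τ : Equiv.Perm (Fin n)} {L K : List (Fin n × Fin n)}

theorem CNOT_eq_update (a b : Fin n) (x : Fin n → Bool) :
    CNOT a b x = Function.update x b (xor (x a) (x b)) :=
  funext fun j => by simp only [CNOT, Function.update_apply]

theorem CNOT_CNOT {a b : Fin n} (h : a ≠ b) (x : Fin n → Bool) : CNOT a b (CNOT a b x) = x := by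
  simp [CNOT_eq_update, h]

theorem CNOT_comp {f : Fin n → Fin n} (hf : Function.Injective f) (a b : Fin n)
    (x : Fin n → Bool) : CNOT a b (x ∘ f) = CNOT (f a) (f b) x ∘ f := by
  ext j
  simp [CNOT, hf.eq_iff]

theorem circuit_append (L K : List (Fin n × Fin n)) (x : Fin n → Bool) :
    circuit (L ++ K) x = circuit K (circuit L x) :=
  List.foldl_append

theorem circuit_circuit_reverse (hL : ∀ g ∈ L, g.1 ≠ g.2) (x : Fin n → Bool) :
    circuit L (circuit L.reverse x) = x := by
  induction L generalizing x with
  | nil => rfl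
  | cons g L ih =>
    rw [List.forall_mem_cons] at hL
    rw [List.reverse_cons, circuit_append]
    exact (congrArg (circuit L) (CNOT_CNOT hL.1 _)).trans (ih hL.2 x)

theorem circuit_map_comp {f : Fin n → Fin n} (hf : Function.Injective f)
    (L : List (Fin n × Fin n)) (x : Fin n → Bool) :
    circuit (L.map (Prod.map f f)) x ∘ f = circuit L (x ∘ f) := by
  induction L generalizing x with
  | nil => rfl
  | cons g L ih => exact (ih _).trans (congrArg (circuit L) (CNOT_comp hf g.1 g.2 x).symm)

/-- The unit vector at `c`: the basis state in which exactly qubit `c` is set. -/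
def basisState (c : Fin n) : Fin n → Bool := fun j => decide (j = c)

/-- The standard bilinear form on basis states over the field with two elements, with respect to
which reversing a circuit and exchanging its controls and targets is transposition. -/
def pairing (x y : Fin n → Bool) : ZMod 2 := ∑ j, (x j).toNat * (y j).toNat

theorem toNat_CNOT (a b : Fin n) (x : Fin n → Bool) (j : Fin n) :
    ((CNOT a b x j).toNat : ZMod 2) =
      (x j).toNat + if j = b then ((x a).toNat : ZMod 2) else 0 := by
  have toNat_xor : ∀ p q : Bool, ((xor p q).toNat : ZMod 2) = q.toNat + p.toNat := by decide
  by_cases hj : j = b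
  · rw [if_pos hj, CNOT, if_pos hj, toNat_xor, hj]
  · rw [if_neg hj, CNOT, if_neg hj, add_zero]

theorem pairing_CNOT (a b : Fin n) (x y : Fin n → Bool) :
    pairing (CNOT a b x) y = pairing x (CNOT b a y) := by
  simp [pairing, toNat_CNOT, add_mul, mul_add, Finset.sum_add_distrib]

theorem pairing_circuit (L : List (Fin n × Fin n)) (x y : Fin n → Bool) :
    pairing (circuit L x) y = pairing x (circuit (L.reverse.map Prod.swap) y) := by
  induction L generalizing x with
  | nil => rfl
  | cons g L ih =>
    rw [List.reverse_cons, List.map_append, circuit_append]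
    exact (ih _).trans (pairing_CNOT g.1 g.2 x _)

theorem pairing_comp (σ : Equiv.Perm (Fin n)) (x y : Fin n → Bool) :
    pairing (x ∘ σ) y = pairing x (y ∘ ⇑σ⁻¹) :=
  Fintype.sum_equiv σ _ _ fun j => by simp

theorem pairing_basisState (j : Fin n) (y : Fin n → Bool) :
    pairing (basisState j) y = (y j).toNat := by
  rw [pairing, Finset.sum_eq_single j (fun i _ hi => by simp [basisState, hi]) (by simp)]
  simp [basisState]

theorem pairing_left_ext {y z : Fin n → Bool} (h : ∀ x, pairing x y = pairing x z) : y = z := by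
  have toNat_injective : ∀ p q : Bool, (p.toNat : ZMod 2) = q.toNat → p = q := by decide
  funext j
  exact toNat_injective _ _ (by rw [← pairing_basisState, ← pairing_basisState, h])

/-- The circuit `L` of proper CNOT gates realizes the permutation gate of `σ`. -/
structure Realizes (L : List (Fin n × Fin n)) (σ : Equiv.Perm (Fin n)) : Prop where
  ne : ∀ g ∈ L, g.1 ≠ g.2
  eq : circuit L = fun x => x ∘ σ

namespace Realizes

theorem append (hL : Realizes L σ) (hK : Realizes K τ) : Realizes (L ++ K) (σ * τ) where
  ne := List.forall_mem_append.2 ⟨hL.ne, hK.ne⟩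
  eq := by
    funext x
    rw [circuit_append, hL.eq, hK.eq]
    rfl

theorem swap {a b : Fin n} (h : a ≠ b) :
    Realizes [(a, b), (b, a), (a, b)] (Equiv.swap a b) where
  ne := by simp [h, h.symm]
  eq := by
    funext x j
    rcases eq_or_ne j a with rfl | ha
    · simp [circuit, CNOT, h, Bool.xor_left_comm (x j) (x b)]
    rcases eq_or_ne j b with rfl | hb
    · simp [circuit, CNOT, h, ha, Bool.xor_comm (x a) (x j)]
    · simp [circuit, CNOT, ha, hb, Equiv.swap_apply_of_ne_of_ne]

theorem conj (hL : Realizes L σ) (τ : Equiv.Perm (Fin n)) :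
    Realizes (L.map (Prod.map τ τ)) (τ * σ * τ⁻¹) where
  ne := List.forall_mem_map.2 fun g hg e => hL.ne g hg (τ.injective e)
  eq := by
    funext x
    rw [Equiv.Perm.coe_mul, ← Function.comp_assoc, Equiv.Perm.coe_mul, ← Function.comp_assoc,
      ← congrFun hL.eq, ← circuit_map_comp τ.injective, Function.comp_assoc]
    simp

theorem transpose (hL : Realizes L σ) : Realizes (L.reverse.map Prod.swap) σ⁻¹ where
  ne := List.forall_mem_map.2 fun g hg => (hL.ne g (List.mem_reverse.1 hg)).symm
  eq := funext fun y =>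
    pairing_left_ext fun x => by rw [← pairing_circuit, hL.eq, pairing_comp]

theorem rotate (h : Realizes (L ++ K) σ) :
    Realizes (K ++ L.map (Prod.map ⇑σ⁻¹ ⇑σ⁻¹)) σ where
  ne := by
    obtain ⟨hL, hK⟩ := List.forall_mem_append.1 h.ne
    exact List.forall_mem_append.2
      ⟨hK, List.forall_mem_map.2 fun g hg e => hL g hg ((σ⁻¹).injective e)⟩
  eq := by
    funext x
    obtain ⟨y, rfl⟩ : ∃ y, circuit L y = x :=
      ⟨_, circuit_circuit_reverse (List.forall_mem_append.1 h.ne).1 x⟩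
    have circuit_K : circuit K (circuit L y) = y ∘ σ := by rw [← circuit_append, h.eq]
    have circuit_map := circuit_map_comp (σ⁻¹ : Equiv.Perm (Fin n)).injective L (y ∘ σ)
    rw [Function.comp_assoc, ← Equiv.Perm.coe_mul, mul_inv_cancel, Equiv.Perm.coe_one,
      Function.comp_id] at circuit_map
    rw [circuit_append, circuit_K, ← circuit_map, Function.comp_assoc, ← Equiv.Perm.coe_mul,
      inv_mul_cancel, Equiv.Perm.coe_one, Function.comp_id]

end Realizes

end Circuits

section TargetCounts

variable {n : ℕ} {σ : Equiv.Perm (Fin n)} {L : List (Fin n × Fin n)} {k : ℕ}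

/-- The number of gates with target `w`. -/
def targetCount (L : List (Fin n × Fin n)) (w : Fin n) : ℕ := (L.map Prod.snd).count w

theorem targetCount_append (L K : List (Fin n × Fin n)) (w : Fin n) :
    targetCount (L ++ K) w = targetCount L w + targetCount K w := by
  simp [targetCount]

theorem targetCount_singleton (g : Fin n × Fin n) (w : Fin n) :
    targetCount [g] w = if g.2 = w then 1 else 0 := by
  simp [targetCount, List.count_singleton]

theorem targetCount_cons (g : Fin n × Fin n) (L : List (Fin n × Fin n)) (w : Fin n) :
    targetCount (g :: L) w = (if g.2 = w then 1 else 0) + targetCount L w := by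
  rw [← targetCount_singleton, ← targetCount_append, List.singleton_append]

theorem targetCount_map {f : Fin n → Fin n} (hf : Function.Injective f)
    (L : List (Fin n × Fin n)) (w : Fin n) :
    targetCount (L.map (Prod.map f f)) (f w) = targetCount L w := by
  have targets : (L.map (Prod.map f f)).map Prod.snd = (L.map Prod.snd).map f := by
    simp [Function.comp_def]
  rw [targetCount, targets, List.count_map_of_injective _ f hf, targetCount]

theorem sum_targetCount (L : List (Fin n × Fin n)) : ∑ w, targetCount L w = L.length := by
  induction L with
  | nil => simp [targetCount]
  | cons g L ih => simp [targetCount_cons, Finset.sum_add_distrib, ih, add_comm]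

theorem eq_of_three_le_targetCount (hlen : L.length ≤ 2 * n + 1) (h : ∀ w, 2 ≤ targetCount L w)
    {a b : Fin n} (ha : 3 ≤ targetCount L a) (hb : 3 ≤ targetCount L b) : a = b := by
  by_contra hab
  have excess (w : Fin n) :
      2 + ((if w = a then 1 else 0) + if w = b then 1 else 0) ≤ targetCount L w := by
    have := h w
    split_ifs <;> subst_vars <;> omega
  have sum_excess : 2 * n + 2 ≤ L.length :=
    calc 2 * n + 2 = ∑ w, (2 + ((if w = a then 1 else 0) + if w = b then 1 else 0)) := by
          simp [Finset.sum_add_distrib, mul_comm]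
      _ ≤ ∑ w, targetCount L w := Finset.sum_le_sum fun w _ => excess w
      _ = L.length := sum_targetCount L
  omega

/-- Every circuit of at most `k` gates realizing `σ` targets each qubit at least twice. -/
def TargetsTwice (σ : Equiv.Perm (Fin n)) (k : ℕ) : Prop :=
  ∀ L, Realizes L σ → L.length ≤ k → ∀ w, 2 ≤ targetCount L w

namespace TargetsTwice

theorem conj (h : TargetsTwice σ k) (τ : Equiv.Perm (Fin n)) :
    TargetsTwice (τ * σ * τ⁻¹) k := by
  intro L hL hlen w
  have hL' := hL.conj τ⁻¹
  rw [show τ⁻¹ * (τ * σ * τ⁻¹) * τ⁻¹⁻¹ = σ by group] at hL'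
  rw [← targetCount_map (τ⁻¹ : Equiv.Perm (Fin n)).injective]
  exact h _ hL' (by simpa using hlen) _

theorem three_le_targetCount_head (hσ : ∀ w, σ w ≠ w) (h : TargetsTwice σ k) {g : Fin n × Fin n}
    (hL : Realizes (g :: L) σ) (hlen : (g :: L).length ≤ k) : 3 ≤ targetCount (g :: L) g.2 := by
  have h2 := h _ (Realizes.rotate (L := [g]) hL) (by simpa using hlen) g.2
  rw [List.map_singleton, targetCount_append, targetCount_singleton, Prod.map_snd,
    if_neg fun e => hσ g.2 (Equiv.Perm.inv_eq_iff_eq.1 e).symm] at h2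
  rw [targetCount_cons, if_pos rfl]
  omega

theorem target_second_eq (hσ : ∀ w, σ w ≠ w) (h : TargetsTwice σ k) (hk : k ≤ 2 * n + 1)
    {g₁ g₂ : Fin n × Fin n} (hL : Realizes (g₁ :: g₂ :: L) σ)
    (hlen : (g₁ :: g₂ :: L).length ≤ k) : g₂.2 = σ⁻¹ g₁.2 := by
  have hne : g₁.2 ≠ σ⁻¹ g₁.2 := fun e => hσ g₁.2 (Equiv.Perm.inv_eq_iff_eq.1 e.symm).symm
  have hrot := Realizes.rotate (L := [g₁]) hL
  have hrot_len : (g₂ :: L ++ [g₁].map (Prod.map ⇑σ⁻¹ ⇑σ⁻¹)).length ≤ k := by simpa using hlen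
  refine eq_of_three_le_targetCount (hrot_len.trans hk) (h _ hrot hrot_len)
    (three_le_targetCount_head hσ h hrot hrot_len) ?_
  have h2 := h _ hL hlen (σ⁻¹ g₁.2)
  rw [targetCount_cons, if_neg hne] at h2
  rw [List.map_singleton, targetCount_append, targetCount_singleton, Prod.map_snd, if_pos rfl]
  omega

theorem isChain_target (hσ : ∀ w, σ w ≠ w) (h : TargetsTwice σ k) (hk : k ≤ 2 * n + 1)
    (hL : Realizes L σ) (hlen : L.length ≤ k) : L.IsChain fun g₁ g₂ => g₂.2 = σ⁻¹ g₁.2 := by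
  rw [List.isChain_iff_forall_rel_of_append_cons_cons]
  rintro g₁ g₂ A B rfl
  refine target_second_eq hσ h hk hL.rotate ?_
  simpa [add_comm, add_left_comm, add_assoc] using hlen

end TargetsTwice

theorem isChain_gate (hσ : ∀ w, σ w ≠ w) (h : TargetsTwice σ k) (h' : TargetsTwice σ⁻¹ k)
    (hk : k ≤ 2 * n + 1) (hL : Realizes L σ) (hlen : L.length ≤ k) :
    L.IsChain fun g₁ g₂ => g₂ = Prod.map ⇑σ⁻¹ ⇑σ⁻¹ g₁ := by
  have controls : L.IsChain fun g₁ g₂ => g₂.1 = σ⁻¹ g₁.1 := by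
    have := h'.isChain_target (fun w e => hσ w (Equiv.Perm.inv_eq_iff_eq.1 e).symm) hk hL.transpose
      (by simpa using hlen)
    rw [List.isChain_map, List.isChain_reverse] at this
    exact this.imp fun g₁ g₂ e => Equiv.Perm.eq_inv_iff_eq.2 (by simpa using e.symm)
  have targets := h.isChain_target hσ hk hL hlen
  rw [List.isChain_iff_getElem] at controls targets ⊢
  exact fun i hi => Prod.ext (controls i hi) (targets i hi)

theorem eq_iterate_of_isChain {α : Type*} {f : α → α} {a : α} {l : List α}
    (h : (a :: l).IsChain fun x y => y = f x) : a :: l = List.iterate f a (l.length + 1) := by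
  induction l generalizing a with
  | nil => rfl
  | cons b l ih =>
    obtain ⟨rfl, hl⟩ := List.isChain_cons_cons.1 h
    rw [List.iterate, List.length_cons, ← ih hl]

end TargetCounts

section Bitsets

variable {N : ℕ}

theorem ofBits_eq_sum (f : Fin N → Bool) : Nat.ofBits f = ∑ j, (f j).toNat * 2 ^ j.val := by
  induction N with
  | zero => rfl
  | succ N ih =>
    rw [Nat.ofBits_succ, ih, Fin.sum_univ_succ, Finset.mul_sum, add_comm]
    simp [pow_succ, mul_comm, mul_left_comm]

theorem ofBits_castSucc (f : Fin (N + 1) → Bool) :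
    Nat.ofBits f = Nat.ofBits (f ∘ Fin.castSucc) + (f (Fin.last N)).toNat * 2 ^ N := by
  simp [ofBits_eq_sum, Fin.sum_univ_castSucc]

theorem ofBits_update_true (f : Fin N → Bool) (t : Fin N) :
    Nat.ofBits (Function.update f t true) =
      Nat.ofBits (Function.update f t false) + 2 ^ t.val := by
  simp only [ofBits_eq_sum, ← Finset.add_sum_erase _ _ (Finset.mem_univ t),
    Function.update_self]
  rw [Bool.toNat_true, Bool.toNat_false, one_mul, zero_mul, zero_add, add_comm]
  congr 1
  refine Finset.sum_congr rfl fun j hj => ?_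
  rw [Function.update_of_ne (Finset.ne_of_mem_erase hj),
    Function.update_of_ne (Finset.ne_of_mem_erase hj)]

/-- The number `S` is read as a set of Boolean vectors, bit `Nat.ofBits f` of `S` telling whether
`f` is a member; intersections and unions are then bitwise operations. -/
def Contains (S : ℕ) (f : Fin N → Bool) : Prop := S.testBit (Nat.ofBits f)

theorem contains_two_pow_ofBits (f : Fin N → Bool) : Contains (2 ^ Nat.ofBits f) f :=
  Nat.testBit_two_pow_self

theorem contains_or {S T : ℕ} {f : Fin N → Bool} :
    Contains (S ||| T) f ↔ Contains S f ∨ Contains T f := by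
  rw [Contains, Nat.testBit_or, Bool.or_eq_true]
  rfl

theorem contains_and {S T : ℕ} {f : Fin N → Bool} :
    Contains (S &&& T) f ↔ Contains S f ∧ Contains T f := by
  rw [Contains, Nat.testBit_and, Bool.and_eq_true]
  rfl

/-- The union of the sets `F a` for `a` in the list `l`. -/
def listUnion {α : Type*} (l : List α) (F : α → ℕ) : ℕ := l.foldr (fun a T => F a ||| T) 0

theorem contains_listUnion {α : Type*} {l : List α} {F : α → ℕ} {f : Fin N → Bool} :
    Contains (listUnion l F) f ↔ ∃ a ∈ l, Contains (F a) f := by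
  induction l with
  | nil => simp [listUnion, Contains]
  | cons a l ih =>
    rw [List.exists_mem_cons_iff, ← ih]
    exact contains_or

/-- The set of the vectors `f` whose coordinates satisfy `P j (f j)`. As `2 ^ Nat.ofBits f` is the
product of the numbers `2 ^ 2 ^ j` with `f j`, expanding the product below sums these powers over
the members of the box. -/
def box (P : Fin N → Bool → Bool) : ℕ :=
  ∏ j, ((P j false).toNat + (P j true).toNat * 2 ^ 2 ^ j.val)

theorem box_castSucc (P : Fin (N + 1) → Bool → Bool) :
    box P = box (P ∘ Fin.castSucc) *
      ((P (Fin.last N) false).toNat + (P (Fin.last N) true).toNat * 2 ^ 2 ^ N) := by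
  simp [box, Fin.prod_univ_castSucc]

theorem box_lt (P : Fin N → Bool → Bool) : box P < 2 ^ 2 ^ N := by
  induction N with
  | zero => simp [box]
  | succ N ih =>
    have hT := ih (P ∘ Fin.castSucc)
    rw [box_castSucc, pow_succ, pow_mul]
    have := Bool.toNat_le (P (Fin.last N) false)
    have := Bool.toNat_le (P (Fin.last N) true)
    generalize box (P ∘ Fin.castSucc) = T at *
    generalize 2 ^ 2 ^ N = X at *
    calc _ ≤ T * (1 + 1 * X) := by gcongr
      _ < X ^ 2 := by nlinarith

theorem contains_box (P : Fin N → Bool → Bool) (f : Fin N → Bool) :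
    Contains (box P) f ↔ ∀ j, P j (f j) := by
  induction N with
  | zero => simp [Contains, box]
  | succ N ih =>
    have ih : Contains (box (P ∘ Fin.castSucc)) (f ∘ Fin.castSucc) ↔
        ∀ j : Fin N, P j.castSucc (f j.castSucc) := ih _ _
    rw [Fin.forall_fin_succ', ← ih]
    have two_halves : box P = 2 ^ 2 ^ N * ((P (Fin.last N) true).toNat * box (P ∘ Fin.castSucc)) +
        (P (Fin.last N) false).toNat * box (P ∘ Fin.castSucc) := by
      rw [box_castSucc]
      ring
    have lower_lt : (P (Fin.last N) false).toNat * box (P ∘ Fin.castSucc) < 2 ^ 2 ^ N :=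
      (Nat.mul_le_mul_right _ (Bool.toNat_le _)).trans_lt (by simpa using box_lt _)
    rw [Contains, ofBits_castSucc, two_halves, Nat.testBit_two_pow_mul_add _ lower_lt]
    have := Nat.ofBits_lt_two_pow (f ∘ Fin.castSucc)
    cases f (Fin.last N)
    · cases h : P (Fin.last N) false <;> simp [this, Contains]
    · cases h : P (Fin.last N) true <;> simp [Contains]

/-- The members of `S` whose coordinate `t` is `v`. -/
def restrict (t : Fin N) (v : Bool) (S : ℕ) : ℕ := S &&& box fun j u => j ≠ t ∨ u = v

theorem contains_restrict {t : Fin N} {v : Bool} {S : ℕ} {f : Fin N → Bool} :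
    Contains (restrict t v S) f ↔ Contains S f ∧ f t = v := by
  rw [restrict, contains_and, contains_box]
  simp [or_iff_not_imp_left]

/-- The image of `S` under negation of coordinate `t`. -/
def notImage (t : Fin N) (S : ℕ) : ℕ :=
  (restrict t false S <<< 2 ^ t.val) ||| (restrict t true S >>> 2 ^ t.val)

/-- The image of `S` under the gate with control `s` and target `t`. -/
def cnotImage (s t : Fin N) (S : ℕ) : ℕ := restrict s false S ||| notImage t (restrict s true S)

/-- The image of `S` under the circuit `L`. -/
def circuitImage (L : List (Fin N × Fin N)) (S : ℕ) : ℕ :=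
  L.foldl (fun T g => cnotImage g.1 g.2 T) S

variable {S : ℕ} {f : Fin N → Bool}

theorem contains_notImage (h : Contains S f) (t : Fin N) :
    Contains (notImage t S) (Function.update f t (!f t)) := by
  rw [notImage, contains_or]
  have hS : Contains (restrict t (f t) S) f := contains_restrict.2 ⟨h, rfl⟩
  cases hft : f t
  · left
    rw [hft, ← Function.update_eq_self t f, hft] at hS
    rwa [Contains, Bool.not_false, ofBits_update_true, Nat.testBit_shiftLeft, Nat.add_sub_cancel,
      decide_eq_true (Nat.le_add_left _ _), Bool.true_and]
  · right
    rw [hft, ← Function.update_eq_self t f, hft] at hS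
    rwa [Contains, Bool.not_true, Nat.testBit_shiftRight, add_comm, ← ofBits_update_true]

theorem contains_cnotImage (h : Contains S f) (s t : Fin N) :
    Contains (cnotImage s t S) (CNOT s t f) := by
  have hS : Contains (restrict s (f s) S) f := contains_restrict.2 ⟨h, rfl⟩
  rw [cnotImage, contains_or, CNOT_eq_update]
  cases hfs : f s
  · left
    rwa [Bool.false_xor, Function.update_eq_self, ← hfs]
  · right
    rw [Bool.true_xor, ← hfs]
    exact contains_notImage hS t

theorem contains_circuitImage (h : Contains S f) (L : List (Fin N × Fin N)) :
    Contains (circuitImage L S) (circuit L f) := by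
  induction L generalizing S f with
  | nil => exact h
  | cons g _ ih => exact ih (contains_cnotImage h g.1 g.2)

end Bitsets

section ParityMatrices

variable {m n : ℕ}

/-- The action of the circuit `L` on parity matrices. Row `j` of a parity matrix records the set
of inputs whose sum qubit `j` carries, so the circuit acts on each column as on a basis state. -/
def evolve (L : List (Fin m × Fin m)) (M : Fin m → Fin n → Bool) : Fin m → Fin n → Bool :=
  fun j k => circuit L (M · k) j

theorem evolve_cons (g : Fin m × Fin m) (L : List (Fin m × Fin m)) (M : Fin m → Fin n → Bool) :
    evolve (g :: L) M = evolve L (evolve [g] M) :=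
  rfl

theorem evolve_singleton (g : Fin m × Fin m) (M : Fin m → Fin n → Bool) :
    evolve [g] M = Function.update M g.2 fun k => xor (M g.1 k) (M g.2 k) := by
  ext j k
  by_cases hj : j = g.2
  · subst hj
    simp [evolve, circuit, CNOT]
  · simp [evolve, circuit, CNOT, hj]

theorem evolve_apply_of_forall_ne {L : List (Fin m × Fin m)} {j : Fin m}
    (h : ∀ g ∈ L, g.2 ≠ j) (M : Fin m → Fin n → Bool) : evolve L M j = M j := by
  induction L generalizing M with
  | nil => rfl
  | cons g L ih =>
    rw [List.forall_mem_cons] at h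
    rw [evolve_cons, ih h.2, evolve_singleton, Function.update_of_ne h.1.symm]

theorem Realizes.evolve_basisState {L : List (Fin m × Fin m)} {σ : Equiv.Perm (Fin m)}
    (hL : Realizes L σ) : evolve L basisState = basisState ∘ σ := by
  funext j k
  rw [evolve, hL.eq]
  rfl

/-- All rows of a parity matrix but row `0`, as one Boolean vector. -/
def tailRows (M : Fin (m + 1) → Fin n → Bool) (i : Fin (m * n)) : Bool :=
  M i.divNat.succ i.modNat

theorem tailRows_finProdFinEquiv (M : Fin (m + 1) → Fin n → Bool) (b : Fin m) (k : Fin n) :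
    tailRows M (finProdFinEquiv (b, k)) = M b.succ k :=
  congrArg (fun p : Fin m × Fin n => M p.1.succ p.2) (finProdFinEquiv.symm_apply_apply (b, k))

theorem tailRows_update_zero (M : Fin (m + 1) → Fin n → Bool) (r : Fin n → Bool) :
    tailRows (Function.update M 0 r) = tailRows M :=
  funext fun i => by simp [tailRows]

theorem tailRows_update (M : Fin (m + 1) → Fin n → Bool) (b : Fin m) (k : Fin n) (v : Bool) :
    tailRows (Function.update M b.succ (Function.update (M b.succ) k v)) =
      Function.update (tailRows M) (finProdFinEquiv (b, k)) v := by
  funext i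
  obtain ⟨⟨j, l⟩, rfl⟩ := finProdFinEquiv.surjective i
  rw [Function.update_apply, tailRows_finProdFinEquiv, tailRows_finProdFinEquiv]
  by_cases hj : j = b
  · subst hj
    simp [Function.update_apply]
  · simp [hj]

/-- The circuit on the entries of the tail rows which adds row `a` to row `b`, both counted from
the first tail row. -/
def rowAddition (n : ℕ) (a b : Fin m) : List (Fin (m * n) × Fin (m * n)) :=
  (List.finRange n).map fun k => (finProdFinEquiv (a, k), finProdFinEquiv (b, k))

theorem circuit_map_tailRows {a b : Fin m} (hab : a ≠ b) {l : List (Fin n)} (hl : l.Nodup)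
    (M : Fin (m + 1) → Fin n → Bool) :
    circuit (l.map fun k => (finProdFinEquiv (a, k), finProdFinEquiv (b, k))) (tailRows M) =
      tailRows (Function.update M b.succ fun k =>
        if k ∈ l then xor (M a.succ k) (M b.succ k) else M b.succ k) := by
  induction l generalizing M with
  | nil => simp [circuit]
  | cons k l ih =>
    obtain ⟨hk, hl⟩ := List.nodup_cons.1 hl
    have first_gate : CNOT (finProdFinEquiv (a, k)) (finProdFinEquiv (b, k)) (tailRows M) =
        tailRows (Function.update M b.succ
          (Function.update (M b.succ) k (xor (M a.succ k) (M b.succ k)))) := by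
      rw [CNOT_eq_update, tailRows_update, tailRows_finProdFinEquiv, tailRows_finProdFinEquiv]
    refine (congrArg (circuit _) first_gate).trans ((ih hl _).trans (congrArg tailRows ?_))
    rw [Function.update_idem]
    congr 1
    funext j
    rcases eq_or_ne j k with rfl | hj
    · simp [hk]
    · simp [hj, hab]

theorem circuit_rowAddition {a b : Fin m} (hab : a ≠ b) (M : Fin (m + 1) → Fin n → Bool) :
    circuit (rowAddition n a b) (tailRows M) =
      tailRows (Function.update M b.succ fun k => xor (M a.succ k) (M b.succ k)) := by
  simpa [rowAddition] using circuit_map_tailRows hab (List.nodup_finRange n) M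

end ParityMatrices

section Search

variable {m n : ℕ} {c c' : Fin n} {g : Fin (m + 1) × Fin (m + 1)}
  {L : List (Fin (m + 1) × Fin (m + 1))} {M : Fin (m + 1) → Fin n → Bool} {d A B S : ℕ}

/-- The tail rows reached from a member of `S` by at most one gate with target other than `0`,
while row `0` is the unit vector at `c`. -/
def gateImage (m : ℕ) (c : Fin n) (S : ℕ) : ℕ :=
  S ||| listUnion (List.finRange m) (fun b => notImage (finProdFinEquiv (b, c)) S) |||
    listUnion ((List.finRange m ×ˢ List.finRange m).filter fun p => p.1 ≠ p.2) fun p =>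
      circuitImage (rowAddition n p.1 p.2) S

/-- The members of `S` with a row equal to the sum of the unit vectors at `c` and `c'`. Adding such
a row turns row `0` from the unit vector at `c` into the one at `c'`. -/
def crossing (m : ℕ) (c c' : Fin n) (S : ℕ) : ℕ :=
  listUnion (List.finRange m) fun b => S &&& box (N := m * n) fun i u =>
    i.divNat ≠ b ∨ u = xor (basisState c i.modNat) (basisState c' i.modNat)

/-- The tail rows reached by at most `d` gates of which only one has target `0` and changes row `0`
from the unit vector at `c` into the one at `c'`; the set `A` has those reached so far before this
change, and `B` those reached so far after it. -/
def search (m : ℕ) (c c' : Fin n) : ℕ → ℕ → ℕ → ℕ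
  | 0, _, B => B
  | d + 1, A, B => search m c c' d (gateImage m c A) (gateImage m c' B ||| crossing m c c' A)

theorem contains_gateImage_self (h : Contains S (tailRows M)) :
    Contains (gateImage m c S) (tailRows M) :=
  contains_or.2 (.inl (contains_or.2 (.inl h)))

theorem contains_gateImage (hM : M 0 = basisState c) (hg : g.1 ≠ g.2) (h0 : g.2 ≠ 0)
    (h : Contains S (tailRows M)) : Contains (gateImage m c S) (tailRows (evolve [g] M)) := by
  obtain ⟨a, b⟩ := g
  obtain ⟨b, rfl⟩ := Fin.exists_succ_eq.2 h0
  rw [gateImage, contains_or, contains_or, contains_listUnion, contains_listUnion,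
    evolve_singleton]
  rcases Fin.eq_zero_or_eq_succ a with rfl | ⟨a, rfl⟩
  · refine .inl (.inr ⟨b, List.mem_finRange b, ?_⟩)
    have row_eq : (fun k => xor (M 0 k) (M b.succ k)) =
        Function.update (M b.succ) c (!M b.succ c) := by
      funext k
      rcases eq_or_ne k c with rfl | hk
      · simp [hM, basisState]
      · simp [hM, basisState, hk]
    rw [row_eq, tailRows_update, ← tailRows_finProdFinEquiv M]
    exact contains_notImage h _
  · have hab : a ≠ b := fun e => hg (congrArg Fin.succ e)
    refine .inr ⟨(a, b), by simpa using hab, ?_⟩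
    rw [← circuit_rowAddition hab]
    exact contains_circuitImage h _

theorem contains_crossing (hM : M 0 = basisState c) (hg : g.1 ≠ g.2) (h0 : g.2 = 0)
    (hM' : evolve [g] M 0 = basisState c') (h : Contains S (tailRows M)) :
    Contains (crossing m c c' S) (tailRows (evolve [g] M)) := by
  obtain ⟨a, b⟩ := g
  obtain rfl : b = 0 := h0
  obtain ⟨a, rfl⟩ := Fin.exists_succ_eq.2 hg
  rw [evolve_singleton, Function.update_self] at hM'
  rw [evolve_singleton, tailRows_update_zero, crossing, contains_listUnion]
  refine ⟨a, List.mem_finRange a, contains_and.2 ⟨h, (contains_box _ _).2 fun i => ?_⟩⟩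
  rw [← hM', ← hM, decide_eq_true_iff, or_iff_not_imp_left, not_not]
  rintro rfl
  simp [tailRows, Bool.xor_comm (M _ _) (M 0 _)]

theorem contains_search_of_forall_ne (hL : ∀ g ∈ L, g.1 ≠ g.2) (h0 : ∀ g ∈ L, g.2 ≠ 0)
    (hM : M 0 = basisState c') (hd : L.length ≤ d) (h : Contains B (tailRows M)) :
    Contains (search m c c' d A B) (tailRows (evolve L M)) := by
  induction d generalizing L M A B with
  | zero =>
    obtain rfl : L = [] := List.length_eq_zero_iff.1 (Nat.le_zero.1 hd)
    exact h
  | succ d ih =>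
    cases L with
    | nil =>
      exact ih hL h0 hM (Nat.zero_le d) (contains_or.2 (.inl (contains_gateImage_self h)))
    | cons g L =>
      rw [List.forall_mem_cons] at hL h0
      have row_zero : evolve [g] M 0 = basisState c' := by
        rw [evolve_apply_of_forall_ne (by simpa using h0.1), hM]
      rw [evolve_cons, search]
      exact ih hL.2 h0.2 row_zero (Nat.le_of_succ_le_succ hd)
        (contains_or.2 (.inl (contains_gateImage hM hL.1 h0.1 h)))

theorem contains_search (hL : ∀ g ∈ L, g.1 ≠ g.2) (hcount : targetCount L 0 ≤ 1) (hc : c ≠ c')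
    (hM : M 0 = basisState c) (hfinal : evolve L M 0 = basisState c') (hd : L.length ≤ d)
    (h : Contains A (tailRows M)) :
    Contains (search m c c' d A B) (tailRows (evolve L M)) := by
  induction L generalizing d M A B with
  | nil =>
    have := congrFun (hM.symm.trans hfinal) c
    simp [basisState, hc] at this
  | cons g L ih =>
    obtain ⟨d, rfl⟩ : ∃ e, d = e + 1 := Nat.exists_eq_add_one.2 (Nat.zero_lt_of_lt hd)
    have hd' : L.length ≤ d := Nat.le_of_succ_le_succ hd
    rw [List.forall_mem_cons] at hL
    rw [targetCount_cons] at hcount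
    rw [evolve_cons] at hfinal ⊢
    rw [search]
    by_cases hg : g.2 = 0
    · have h0 : ∀ k ∈ L, k.2 ≠ 0 := by
        have : targetCount L 0 = 0 := by simpa [hg] using hcount
        exact fun k hk hk0 => List.count_eq_zero.1 this (hk0 ▸ List.mem_map_of_mem hk)
      have row_zero : evolve [g] M 0 = basisState c' := by
        rw [← hfinal, evolve_apply_of_forall_ne h0]
      exact contains_search_of_forall_ne hL.2 h0 row_zero hd'
        (contains_or.2 (.inr (contains_crossing hM hL.1 hg row_zero h)))
    · have row_zero : evolve [g] M 0 = basisState c := by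
        rw [evolve_apply_of_forall_ne (by simpa using hg), hM]
      exact ih hL.2 (le_of_add_le_right hcount) row_zero hfinal hd'
        (contains_gateImage hM hL.1 hg h)

end Search

theorem not_contains_search_eleven :
    ¬ Contains
      (search 4 (0 : Fin 5) 1 11 (2 ^ Nat.ofBits (tailRows (m := 4) (n := 5) basisState)) 0)
      (tailRows (m := 4) (n := 5) (basisState ∘ finRotate 5)) := by
  unfold Contains
  decide +kernel

theorem two_le_targetCount_zero {L : List (Fin 5 × Fin 5)} (hL : Realizes L (finRotate 5))
    (hlen : L.length ≤ 11) : 2 ≤ targetCount L 0 := by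
  by_contra! hcount
  refine not_contains_search_eleven ?_
  rw [← hL.evolve_basisState]
  refine contains_search hL.ne (Nat.le_of_lt_succ hcount) (by decide) rfl ?_ hlen
    (contains_two_pow_ofBits _)
  rw [hL.evolve_basisState]
  rfl

theorem conj_subRight_finRotate {n : ℕ} [NeZero n] (w : Fin n) :
    Equiv.subRight w * finRotate n * (Equiv.subRight w)⁻¹ = finRotate n := by
  refine Equiv.ext fun j => ?_
  simp [Equiv.Perm.inv_def, finRotate_apply, add_right_comm j w 1]

theorem conj_neg_finRotate {n : ℕ} [NeZero n] :
    Equiv.neg (Fin n) * finRotate n * (Equiv.neg (Fin n))⁻¹ = (finRotate n)⁻¹ := by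
  refine Equiv.ext fun j => ?_
  simp [Equiv.Perm.inv_def, finRotate_apply, sub_eq_neg_add]

theorem targetsTwice_finRotate : TargetsTwice (finRotate 5) 11 := by
  intro L hL hlen w
  have hL' := hL.conj (Equiv.subRight w)
  rw [conj_subRight_finRotate] at hL'
  rw [← targetCount_map (Equiv.subRight w).injective, Equiv.subRight_apply, sub_self]
  exact two_le_targetCount_zero hL' (by simpa using hlen)

theorem circuit_iterate_ne : ∀ k < 12, ∀ g : Fin 5 × Fin 5,
    circuit (List.iterate (Prod.map ⇑(finRotate 5)⁻¹ ⇑(finRotate 5)⁻¹) g k) ≠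
      fun x => x ∘ finRotate 5 := by
  decide +kernel

theorem twelve_le_length {L : List (Fin 5 × Fin 5)} (hL : Realizes L (finRotate 5)) :
    12 ≤ L.length := by
  by_contra! hlen
  have hlen : L.length ≤ 11 := Nat.le_of_lt_succ hlen
  have twice' : TargetsTwice (finRotate 5)⁻¹ 11 :=
    conj_neg_finRotate (n := 5) ▸ targetsTwice_finRotate.conj (Equiv.neg (Fin 5))
  have chain := isChain_gate (by decide) targetsTwice_finRotate twice' le_rfl hL hlen
  cases L with
  | nil => exact circuit_iterate_ne 0 (by decide) (0, 0) hL.eq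
  | cons g L =>
    rw [eq_iterate_of_isChain chain] at hL
    exact circuit_iterate_ne _ (Nat.lt_succ_of_le hlen) g hL.eq

theorem realizes_adjacent_swaps :
    Realizes [(0, 1), (1, 0), (0, 1), (1, 2), (2, 1), (1, 2), (2, 3), (3, 2), (2, 3),
      (3, 4), (4, 3), (3, 4)] (finRotate 5) := by
  have product : finRotate 5 =
      Equiv.swap 0 1 * (Equiv.swap 1 2 * (Equiv.swap 2 3 * Equiv.swap 3 4)) := by decide
  rw [product]
  exact (Realizes.swap (by decide)).append <| (Realizes.swap (by decide)).append <|
    (Realizes.swap (by decide)).append (Realizes.swap (by decide))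

/-- On five qubits, the minimal number of CNOT gates realizing the cyclic shift
`j ↦ j + 1 (mod 5)` equals `12`, i.e. `C(5) = 12`. -/
theorem cycle5_cnot_cost_eq_twelve :
    sInf {k : ℕ | ∃ L : List (Fin 5 × Fin 5), (∀ g ∈ L, g.1 ≠ g.2) ∧ L.length = k ∧
        circuit L = fun x => x ∘ (finRotate 5)} = 12 := by
  refine IsLeast.csInf_eq ⟨?_, ?_⟩
  · exact ⟨_, realizes_adjacent_swaps.ne, rfl, realizes_adjacent_swaps.eq⟩
  · rintro _ ⟨L, hne, rfl, hL⟩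
    exact twelve_le_length ⟨hne, hL⟩
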